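/- (Proposition 3, MDP case: proportionality under the stationarity null via Π₄ permutations.) Take 𝒴 = 𝒞 and suppose the law of the data has probability mass function f(d) = μ(c₁) · ∏_{t=1}^{T−1} 1[y_t = c_{t+1}] · ∏_{t=1}^T a_t(x_t; c_t, h_{t−1}(d)) · P(y_t; c_t, x_t), where μ : 𝒞 → ℝ≥0 is the initial-state distribution and P : 𝒞 × 𝒞 × 𝒳 → ℝ≥0 is a transition density that does not depend on t (the non-stationarity null hypothesis H₀^S for an MDP). Fix a trajectory d with y_t = c_{t+1} for all t ∈ {1, …, T−1}, and define Π₄ = {π a permutation of {1,…,T} : y_{π(t)} = c_{π(t+1)} for all t ∈ {1,…,T−1}, and c_{π(1)} = c₁}. Then for every π ∈ Π₄, the permuted trajectory d̃ defined by (c̃_t, x̃_t, ỹ_t) = (c_{π(t)}, x_{π(t)}, y_{π(t)}) satisfies f(d̃) = K(d) · f̂(d̃), where K(d) = μ(c₁) · ∏_{t=1}^T P(y_t; c_t, x_t) depends only on d (not on π). -/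

import Mathlib

open scoped NNReal Classical BigOperators

noncomputable section

variable {C X : Type*}

/-- Embedding of an index `s < t` into `Fin T`. -/
def emb {T : ℕ} (t : Fin T) (s : Fin (t : ℕ)) : Fin T :=
  ⟨(s : ℕ), lt_trans s.isLt t.isLt⟩

/-- The history `h_{t−1}(d)`: the prefix of the trajectory strictly before time `t`. -/
def hist {T : ℕ} (d : Fin T → C × X × C) (t : Fin T) : Fin (t : ℕ) → C × X × C :=
  fun s => d (emb t s)

/-- The unnormalized assignment likelihood
`f̂(d) = ∏_{t=1}^T a_t(x_t; c_t, h_{t−1}(d))`. -/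
def assignLik {T : ℕ} (a : (t : Fin T) → X → C → (Fin (t : ℕ) → C × X × C) → ℝ≥0)
    (d : Fin T → C × X × C) : ℝ≥0 :=
  ∏ t, a t (d t).2.1 (d t).1 (hist d t)

/-- The indicator `∏_{t=1}^{T−1} 1[y_t = c_{t+1}]` enforcing the MDP structure. -/
def chainInd {T : ℕ} (d : Fin T → C × X × C) : ℝ≥0 :=
  ∏ t : Fin T,
    if h : (t : ℕ) + 1 < T then
      (if (d t).2.2 = (d ⟨(t : ℕ) + 1, h⟩).1 then 1 else 0)
    else 1

/-- The law of an MDP trajectory under the stationarity null `H₀^S` (the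
transition density `P` does not depend on `t`):
`f(d) = μ(c₁) · ∏_{t<T} 1[y_t = c_{t+1}] · ∏_t a_t(x_t; c_t, h_{t−1}(d)) · P(y_t; c_t, x_t)`. -/
def mdpLaw {T : ℕ} (hT : 0 < T) (μ : C → ℝ≥0)
    (a : (t : Fin T) → X → C → (Fin (t : ℕ) → C × X × C) → ℝ≥0)
    (P : C → C → X → ℝ≥0)
    (d : Fin T → C × X × C) : ℝ≥0 :=
  μ (d ⟨0, hT⟩).1 * chainInd d *
    ∏ t, a t (d t).2.1 (d t).1 (hist d t) * P (d t).2.2 (d t).1 (d t).2.1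

theorem chainInd_eq_one {T : ℕ} {d : Fin T → C × X × C}
    (hd : ∀ (t : Fin T) (ht : (t : ℕ) + 1 < T), (d t).2.2 = (d ⟨(t : ℕ) + 1, ht⟩).1) :
    chainInd d = 1 :=
  Finset.prod_eq_one fun t _ ↦ by
    split_ifs with ht hlink
    · rfl
    · exact absurd (hd t ht) hlink
    · rfl

theorem mdpLaw_eq_mul_assignLik {T : ℕ} (hT : 0 < T) (μ : C → ℝ≥0)
    (a : (t : Fin T) → X → C → (Fin (t : ℕ) → C × X × C) → ℝ≥0)
    (P : C → C → X → ℝ≥0) (d : Fin T → C × X × C) :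
    mdpLaw hT μ a P d =
      μ (d ⟨0, hT⟩).1 * chainInd d * (∏ t, P (d t).2.2 (d t).1 (d t).2.1) * assignLik a d := by
  rw [mdpLaw, assignLik, Finset.prod_mul_distrib]
  ring

theorem prop3_mdp_stationarity_null_general {T : ℕ} (hT : 0 < T) (μ : C → ℝ≥0)
    (a : (t : Fin T) → X → C → (Fin (t : ℕ) → C × X × C) → ℝ≥0)
    (P : C → C → X → ℝ≥0) (d : Fin T → C × X × C) (π : Equiv.Perm (Fin T))
    (hchain : ∀ (t : Fin T) (ht : (t : ℕ) + 1 < T),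
      (d (π t)).2.2 = (d (π ⟨(t : ℕ) + 1, ht⟩)).1)
    (hinit : (d (π ⟨0, hT⟩)).1 = (d ⟨0, hT⟩).1) :
    mdpLaw hT μ a P (fun t ↦ d (π t)) =
      (μ (d ⟨0, hT⟩).1 * ∏ t, P (d t).2.2 (d t).1 (d t).2.1) *
        assignLik a (fun t ↦ d (π t)) := by
  have htransition : ∏ t, P (d (π t)).2.2 (d (π t)).1 (d (π t)).2.1 =
      ∏ t, P (d t).2.2 (d t).1 (d t).2.1 :=
    Equiv.prod_comp π fun t ↦ P (d t).2.2 (d t).1 (d t).2.1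
  rw [mdpLaw_eq_mul_assignLik, chainInd_eq_one hchain, mul_one, hinit, htransition]

/-- **(Proposition 3, MDP case: proportionality under the stationarity null via
`Π₄` permutations.)** For every `π ∈ Π₄`, the permuted trajectory `d̃ = d ∘ π`
satisfies `f(d̃) = K(d) · f̂(d̃)`, where `K(d) = μ(c₁) · ∏_t P(y_t; c_t, x_t)`
does not depend on `π`. -/
theorem prop3_mdp_stationarity_null
    [Countable C] [Countable X]
    (T : ℕ) (hT : 0 < T) (μ : C → ℝ≥0)
    (a : (t : Fin T) → X → C → (Fin (t : ℕ) → C × X × C) → ℝ≥0)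
    (P : C → C → X → ℝ≥0)
    (d : Fin T → C × X × C)
    (hd : ∀ (t : Fin T) (ht : (t : ℕ) + 1 < T),
      (d t).2.2 = (d ⟨(t : ℕ) + 1, ht⟩).1) :
    ∀ π : Equiv.Perm (Fin T),
      (∀ (t : Fin T) (ht : (t : ℕ) + 1 < T),
        (d (π t)).2.2 = (d (π ⟨(t : ℕ) + 1, ht⟩)).1) →
      (d (π ⟨0, hT⟩)).1 = (d ⟨0, hT⟩).1 →
      mdpLaw hT μ a P (fun t => d (π t)) =
        (μ (d ⟨0, hT⟩).1 * ∏ t, P (d t).2.2 (d t).1 (d t).2.1) *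
          assignLik a (fun t => d (π t)) :=
  fun π hchain hinit ↦ prop3_mdp_stationarity_null_general hT μ a P d π hchain hinit
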